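/- Let F be an algebraically closed field of characteristic zero, n ≥ 1, and p, q ≥ 1. If A is a subsuperalgebra of Q(n) that is isomorphic as a superalgebra to osp(p,q), then dim_F A ≤ (n² + n)/2. -/

import Mathlib

open Matrix

namespace SJ

section SuperDefs

variable {F : Type*} [Field F] {J : Type*} [AddCommGroup J] [Module F J]

/-- A graded subspace: `A = (A ∩ J₀) ⊕ (A ∩ J₁)`. -/
def IsGradedG (ev od : Submodule F J) (A : Submodule F J) : Prop :=
  A = (A ⊓ ev) ⊔ (A ⊓ od)

/-- A subsuperalgebra: a graded subspace closed under the product. -/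
def IsSubalgG (mul : J → J → J) (ev od : Submodule F J) (A : Submodule F J) : Prop :=
  IsGradedG ev od A ∧ ∀ x ∈ A, ∀ y ∈ A, mul x y ∈ A

/-- Nontrivial: `A ∩ J₁ ≠ {0}`. -/
def NontrivG (od : Submodule F J) (A : Submodule F J) : Prop := A ⊓ od ≠ ⊥

/-- Simple: `A∘A ≠ 0` and the only graded subspaces `I ⊆ A` with `A∘I ⊆ I` are `0` and `A`. -/
def IsSimpleG (mul : J → J → J) (ev od : Submodule F J) (A : Submodule F J) : Prop :=
  (∃ x ∈ A, ∃ y ∈ A, mul x y ≠ 0) ∧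
  ∀ I : Submodule F J, I ≤ A → IsGradedG ev od I →
    (∀ x ∈ A, ∀ y ∈ I, mul x y ∈ I) → I = ⊥ ∨ I = A

/-- An isomorphism of superalgebras: an F-linear bijection mapping even part onto even
part, odd part onto odd part, and preserving the product. -/
def SuperIsoG {J₂ : Type*} [AddCommGroup J₂] [Module F J₂]
    (mul₁ : J → J → J) (ev₁ od₁ : Submodule F J)
    (mul₂ : J₂ → J₂ → J₂) (ev₂ od₂ : Submodule F J₂)
    (A : Submodule F J) (B : Submodule F J₂) : Prop :=
  ∃ e : A ≃ₗ[F] B,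
    (∀ x : A, (x : J) ∈ ev₁ ↔ (e x : J₂) ∈ ev₂) ∧
    (∀ x : A, (x : J) ∈ od₁ ↔ (e x : J₂) ∈ od₂) ∧
    ∀ x y z : A, mul₁ x y = (z : J) → mul₂ (e x) (e y) = (e z : J₂)

end SuperDefs

/-- The space of (n+m)×(n+m) matrices, indices split into even (`inl`) and odd (`inr`) ones. -/
abbrev MJ (F : Type*) [Field F] (n m : ℕ) :=
  Matrix (Fin n ⊕ Fin m) (Fin n ⊕ Fin m) F

/-- Parity of an index. -/
def pty {n m : ℕ} : Fin n ⊕ Fin m → Bool := Sum.elim (fun _ => false) (fun _ => true)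

variable (F : Type*) [Field F]

/-- The odd component of a matrix (block-antidiagonal part). -/
def oddPart {n m : ℕ} (X : MJ F n m) : MJ F n m :=
  Matrix.of fun i j => if pty i = pty j then 0 else X i j

/-- The even component of a matrix (block-diagonal part). -/
def evenPart {n m : ℕ} (X : MJ F n m) : MJ F n m :=
  Matrix.of fun i j => if pty i = pty j then X i j else 0

variable {F}

/-- The super-Jordan product on `M_{n,m}(F)^{(+)}`:  `x∘y = (xy+yx)/2` when `x` or `y` is
even and `x∘y = (xy−yx)/2` when both are odd, extended bilinearly.  (For arbitrary
matrices this bilinear extension equals `(xy+yx)/2 − y₁x₁` where `x₁, y₁` are the odd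
components.) -/
def jmul {n m : ℕ} (X Y : MJ F n m) : MJ F n m :=
  (2 : F)⁻¹ • (X * Y + Y * X) - oddPart F Y * oddPart F X

variable (F)

/-- The even part `J₀` of `M_{n,m}(F)^{(+)}`: block-diagonal matrices. -/
def evenSub (n m : ℕ) : Submodule F (MJ F n m) where
  carrier := {X | ∀ i j, pty i ≠ pty j → X i j = 0}
  zero_mem' := by intro i j _; simp
  add_mem' := by
    intro a b ha hb i j h
    simp only [Matrix.add_apply, ha i j h, hb i j h, add_zero]
  smul_mem' := by
    intro c a ha i j h
    simp only [Matrix.smul_apply, ha i j h, smul_zero]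

/-- The odd part `J₁` of `M_{n,m}(F)^{(+)}`: block-antidiagonal matrices. -/
def oddSub (n m : ℕ) : Submodule F (MJ F n m) where
  carrier := {X | ∀ i j, pty i = pty j → X i j = 0}
  zero_mem' := by intro i j _; simp
  add_mem' := by
    intro a b ha hb i j h
    simp only [Matrix.add_apply, ha i j h, hb i j h, add_zero]
  smul_mem' := by
    intro c a ha i j h
    simp only [Matrix.smul_apply, ha i j h, smul_zero]

/-- Statements about `M_{n,m}(F)^{(+)}` specialized from the generic definitions. -/
abbrev IsGraded {n m : ℕ} (A : Submodule F (MJ F n m)) : Prop :=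
  IsGradedG (evenSub F n m) (oddSub F n m) A

abbrev IsSubalg {n m : ℕ} (A : Submodule F (MJ F n m)) : Prop :=
  IsSubalgG jmul (evenSub F n m) (oddSub F n m) A

abbrev Nontriv {n m : ℕ} (A : Submodule F (MJ F n m)) : Prop :=
  NontrivG (oddSub F n m) A

abbrev IsSimple {n m : ℕ} (A : Submodule F (MJ F n m)) : Prop :=
  IsSimpleG jmul (evenSub F n m) (oddSub F n m) A

abbrev SuperIso {n₁ m₁ n₂ m₂ : ℕ}
    (A : Submodule F (MJ F n₁ m₁)) (B : Submodule F (MJ F n₂ m₂)) : Prop :=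
  SuperIsoG jmul (evenSub F n₁ m₁) (oddSub F n₁ m₁)
    jmul (evenSub F n₂ m₂) (oddSub F n₂ m₂) A B

/-- The standard symplectic matrix `S = [[0, I_q],[−I_q, 0]]` of size `2q`. -/
def SMat (q : ℕ) : Matrix (Fin (2 * q)) (Fin (2 * q)) F :=
  Matrix.of fun i j =>
    if (j : ℕ) = (i : ℕ) + q then (1 : F) else if (i : ℕ) = (j : ℕ) + q then -1 else 0

/-- `osp(p,q)`: block matrices `[[A, C],[S⁻¹Cᵀ, D]]` inside `M_{p,2q}(F)^{(+)}` with
`A` symmetric, `C` arbitrary and `Dᵀ S = S D`.  The condition on the lower-left block is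
recorded in the equivalent form `S · C₂₁ = C₁₂ᵀ`. -/
def ospSub (p q : ℕ) : Submodule F (MJ F p (2 * q)) where
  carrier := {X | (X.toBlocks₁₁)ᵀ = X.toBlocks₁₁ ∧
    SMat F q * X.toBlocks₂₁ = (X.toBlocks₁₂)ᵀ ∧
    (X.toBlocks₂₂)ᵀ * SMat F q = SMat F q * X.toBlocks₂₂}
  zero_mem' := by
    refine ⟨?_, ?_, ?_⟩ <;> ext i j <;>
      simp [Matrix.toBlocks₁₁, Matrix.toBlocks₁₂, Matrix.toBlocks₂₁, Matrix.toBlocks₂₂,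
        Matrix.mul_apply]
  add_mem' := by
    rintro a b ⟨ha1, ha2, ha3⟩ ⟨hb1, hb2, hb3⟩
    have e11 : (a + b).toBlocks₁₁ = a.toBlocks₁₁ + b.toBlocks₁₁ := rfl
    have e12 : (a + b).toBlocks₁₂ = a.toBlocks₁₂ + b.toBlocks₁₂ := rfl
    have e21 : (a + b).toBlocks₂₁ = a.toBlocks₂₁ + b.toBlocks₂₁ := rfl
    have e22 : (a + b).toBlocks₂₂ = a.toBlocks₂₂ + b.toBlocks₂₂ := rfl
    refine ⟨?_, ?_, ?_⟩
    · rw [e11, Matrix.transpose_add, ha1, hb1]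
    · rw [e21, e12, Matrix.mul_add, Matrix.transpose_add, ha2, hb2]
    · rw [e22, Matrix.transpose_add, Matrix.add_mul, Matrix.mul_add, ha3, hb3]
  smul_mem' := by
    rintro c a ⟨ha1, ha2, ha3⟩
    have e11 : (c • a).toBlocks₁₁ = c • a.toBlocks₁₁ := rfl
    have e12 : (c • a).toBlocks₁₂ = c • a.toBlocks₁₂ := rfl
    have e21 : (c • a).toBlocks₂₁ = c • a.toBlocks₂₁ := rfl
    have e22 : (c • a).toBlocks₂₂ = c • a.toBlocks₂₂ := rfl
    refine ⟨?_, ?_, ?_⟩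
    · rw [e11, Matrix.transpose_smul, ha1]
    · rw [e21, e12, Matrix.mul_smul, Matrix.transpose_smul, ha2]
    · rw [e22, Matrix.transpose_smul, Matrix.smul_mul, Matrix.mul_smul, ha3]

/-- `Q(n)`: matrices `[[A, B],[B, A]]` inside `M_{n,n}(F)^{(+)}`. -/
def QSub (n : ℕ) : Submodule F (MJ F n n) where
  carrier := {X | (∀ i j, X (Sum.inr i) (Sum.inr j) = X (Sum.inl i) (Sum.inl j)) ∧
    (∀ i j, X (Sum.inr i) (Sum.inl j) = X (Sum.inl i) (Sum.inr j))}
  zero_mem' := by constructor <;> intro i j <;> simp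
  add_mem' := by
    rintro a b ⟨ha1, ha2⟩ ⟨hb1, hb2⟩
    constructor <;> intro i j <;>
      simp only [Matrix.add_apply, ha1 i j, ha2 i j, hb1 i j, hb2 i j]
  smul_mem' := by
    rintro c a ⟨ha1, ha2⟩
    constructor <;> intro i j <;>
      simp only [Matrix.smul_apply, ha1 i j, ha2 i j]

/-- `P(n)`: matrices `[[A, B],[C, Aᵀ]]` with `B` symmetric and `C` skew-symmetric,
inside `M_{n,n}(F)^{(+)}`. -/
def PSub (n : ℕ) : Submodule F (MJ F n n) where
  carrier := {X | (∀ i j, X (Sum.inr i) (Sum.inr j) = X (Sum.inl j) (Sum.inl i)) ∧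
    (∀ i j, X (Sum.inl i) (Sum.inr j) = X (Sum.inl j) (Sum.inr i)) ∧
    (∀ i j, X (Sum.inr i) (Sum.inl j) = - X (Sum.inr j) (Sum.inl i))}
  zero_mem' := by refine ⟨?_, ?_, ?_⟩ <;> intro i j <;> simp
  add_mem' := by
    rintro a b ⟨ha1, ha2, ha3⟩ ⟨hb1, hb2, hb3⟩
    refine ⟨?_, ?_, ?_⟩ <;> intro i j <;>
      simp only [Matrix.add_apply, ha1 i j, ha2 i j, ha3 i j, hb1 i j, hb2 i j, hb3 i j] <;>
      ring
  smul_mem' := by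
    rintro c a ⟨ha1, ha2, ha3⟩
    refine ⟨?_, ?_, ?_⟩ <;> intro i j <;>
      simp only [Matrix.smul_apply, ha1 i j, ha2 i j, ha3 i j, smul_neg]

/-!
Write `e_j` for the diagonal matrix units in the symmetric block of `osp(p,q)` and, for a
`p × 2q` matrix `C`, write `o(C) = [[0, C], [S⁻¹Cᵀ, 0]]`. For every `i`,
`1 = ∑_j e_j + 2q e_i + ∑_a o(E_ia) ∘ o(E_ia S)`.
Products of two odd elements are commutators, so they have trace zero under any homomorphism `φ`
to a matrix superalgebra. As the trace of an idempotent is its rank, applying `trace ∘ φ` gives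
`rank φ(1) = ∑_j rank φ(e_j) + 2q rank φ(e_i)`. A nonzero even idempotent of `Q(n)` has two equal
diagonal blocks, hence rank at least `2`, and `rank φ(1) ≤ 2n`; therefore `p + 2q ≤ n`. Finally,
multiplying by the matrix of the orthosymplectic form turns an element of `osp(p,q)` into a matrix
whose entries above the diagonal determine those below it, so that
`dim osp(p,q) ≤ (p + 2q + 1).choose 2`.
-/

section LinearAlgebra

variable {K ι : Type*} [Field K] [Fintype ι]

lemma sum_fromBlocks {α l m n o R : Type*} [AddCommMonoid R] (s : Finset α)
    (A : α → Matrix n l R) (B : α → Matrix n m R) (C : α → Matrix o l R) (D : α → Matrix o m R) :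
    ∑ x ∈ s, fromBlocks (A x) (B x) (C x) (D x) =
      fromBlocks (∑ x ∈ s, A x) (∑ x ∈ s, B x) (∑ x ∈ s, C x) (∑ x ∈ s, D x) := by
  ext (i | i) (j | j) <;> simp [Matrix.sum_apply]

lemma rank_eq_zero_iff {κ : Type*} {P : Matrix κ ι K} : P.rank = 0 ↔ P = 0 := by
  classical
  rw [Matrix.rank, Submodule.finrank_eq_zero, LinearMap.range_eq_bot, ← Matrix.toLin'_apply',
    LinearEquiv.map_eq_zero_iff]

lemma trace_eq_rank_of_isIdempotentElem {P : Matrix ι ι K} (hP : IsIdempotentElem P) :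
    P.trace = (P.rank : K) := by
  classical
  have hproj := LinearMap.IsIdempotentElem.isProj_range _ (hP.map (Matrix.toLinAlgEquiv' (R := K)))
  rw [← Matrix.trace_toLin'_eq, Matrix.rank, ← Matrix.toLin'_apply']
  exact hproj.trace

lemma finrank_le_choose_of_apply_eq_zero_symm {V : Submodule K (Matrix ι ι K)}
    (hV : ∀ X ∈ V, ∀ i j, X i j = 0 → X j i = 0) :
    Module.finrank K V ≤ (Fintype.card ι + 1).choose 2 := by
  classical
  let upperEntries : V →ₗ[K] (Sym2 ι → K) :=
    LinearMap.pi fun s => Matrix.entryLinearMap K K s.out.1 s.out.2 ∘ₗ V.subtype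
  have injective_upperEntries : Function.Injective upperEntries := by
    refine LinearMap.ker_eq_bot.mp (LinearMap.ker_eq_bot'.mpr fun X hX => Subtype.ext ?_)
    ext i j
    have entry_eq_zero : (X : Matrix ι ι K) s(i, j).out.1 s(i, j).out.2 = 0 := congrFun hX s(i, j)
    have out_eq : s(s(i, j).out.1, s(i, j).out.2) = s(i, j) := Quot.out_eq _
    rcases Sym2.eq_iff.mp out_eq with ⟨hi, hj⟩ | ⟨hi, hj⟩
    · rwa [hi, hj] at entry_eq_zero
    · rw [hi, hj] at entry_eq_zero
      exact hV X X.2 _ _ entry_eq_zero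
  calc Module.finrank K V ≤ Module.finrank K (Sym2 ι → K) :=
        LinearMap.finrank_le_finrank_of_injective injective_upperEntries
    _ = (Fintype.card ι + 1).choose 2 := by
        rw [Module.finrank_fintype_fun_eq_card, Sym2.card]

end LinearAlgebra

section SuperJordanProduct

variable {F} {n m : ℕ}

lemma fromBlocks_mem_evenSub (A : Matrix (Fin n) (Fin n) F) (D : Matrix (Fin m) (Fin m) F) :
    fromBlocks A 0 0 D ∈ evenSub F n m := by
  rintro (i | i) (j | j) h <;> simp_all [pty]

lemma fromBlocks_mem_oddSub (B : Matrix (Fin n) (Fin m) F) (C : Matrix (Fin m) (Fin n) F) :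
    fromBlocks 0 B C 0 ∈ oddSub F n m := by
  rintro (i | i) (j | j) h <;> simp_all [pty]

lemma oddPart_of_mem_evenSub {X : MJ F n m} (hX : X ∈ evenSub F n m) : oddPart F X = 0 := by
  ext i j
  by_cases h : pty i = pty j
  · simp [oddPart, h]
  · simp [oddPart, h, hX i j h]

lemma oddPart_of_mem_oddSub {X : MJ F n m} (hX : X ∈ oddSub F n m) : oddPart F X = X := by
  ext i j
  by_cases h : pty i = pty j
  · simp [oddPart, h, hX i j h]
  · simp [oddPart, h]

variable [NeZero (2 : F)]

lemma jmul_self_of_mem_evenSub {X : MJ F n m} (hX : X ∈ evenSub F n m) : jmul X X = X * X := by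
  rw [jmul, oddPart_of_mem_evenSub hX, zero_mul, sub_zero, ← two_smul F (X * X),
    inv_smul_smul₀ two_ne_zero]

lemma jmul_of_mem_oddSub {X Y : MJ F n m} (hX : X ∈ oddSub F n m) (hY : Y ∈ oddSub F n m) :
    jmul X Y = (2 : F)⁻¹ • (X * Y - Y * X) := by
  rw [jmul, oddPart_of_mem_oddSub hX, oddPart_of_mem_oddSub hY, eq_inv_smul_iff₀ two_ne_zero,
    smul_sub, smul_inv_smul₀ two_ne_zero, two_smul]
  abel

lemma trace_jmul_of_mem_oddSub {X Y : MJ F n m} (hX : X ∈ oddSub F n m) (hY : Y ∈ oddSub F n m) :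
    (jmul X Y).trace = 0 := by
  rw [jmul_of_mem_oddSub hX hY, trace_smul, trace_sub, trace_mul_comm, sub_self, smul_zero]

end SuperJordanProduct

section QueerSuperalgebra

variable {F} {n : ℕ} {X : MJ F n n}

lemma eq_fromBlocks_of_mem_QSub_of_mem_evenSub (hQ : X ∈ QSub F n) (hX : X ∈ evenSub F n n) :
    X = fromBlocks X.toBlocks₁₁ 0 0 X.toBlocks₁₁ := by
  ext (i | i) (j | j)
  · rfl
  · exact hX _ _ (by simp [pty])
  · exact hX _ _ (by simp [pty])
  · exact hQ.1 i j

lemma rank_eq_two_mul_of_mem_QSub [CharZero F] (hQ : X ∈ QSub F n) (hX : X ∈ evenSub F n n)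
    (hidem : IsIdempotentElem X) : X.rank = 2 * X.toBlocks₁₁.rank := by
  have hblocks := eq_fromBlocks_of_mem_QSub_of_mem_evenSub hQ hX
  have hidem₁₁ : IsIdempotentElem X.toBlocks₁₁ := by
    have h := congrArg toBlocks₁₁ hidem.eq
    rw [hblocks, fromBlocks_multiply] at h
    simpa [IsIdempotentElem] using h
  have htrace : X.trace = 2 * X.toBlocks₁₁.trace := by
    rw [hblocks, toBlocks_fromBlocks₁₁, two_mul]
    simp [trace]
  rw [trace_eq_rank_of_isIdempotentElem hidem, trace_eq_rank_of_isIdempotentElem hidem₁₁] at htrace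
  exact_mod_cast htrace

lemma two_le_rank_of_mem_QSub [CharZero F] (hQ : X ∈ QSub F n) (hX : X ∈ evenSub F n n)
    (hidem : IsIdempotentElem X) (hX₀ : X ≠ 0) : 2 ≤ X.rank := by
  have hrank := rank_eq_two_mul_of_mem_QSub hQ hX hidem
  have hrank₀ : X.rank ≠ 0 := rank_eq_zero_iff.not.mpr hX₀
  omega

end QueerSuperalgebra

section SymplecticMatrix

lemma SMat_eq_reindex_neg_J (q : ℕ) :
    SMat F q = reindexAlgEquiv F F (finSumFinEquiv.trans (finCongr (two_mul q).symm))
      (-J (Fin q) F) := by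
  set σ := finSumFinEquiv.trans (finCongr (two_mul q).symm) with hσ
  ext a b
  obtain ⟨a, rfl⟩ := σ.surjective a
  obtain ⟨b, rfl⟩ := σ.surjective b
  rw [coe_reindexAlgEquiv, reindex_apply, submatrix_apply, σ.symm_apply_apply, σ.symm_apply_apply]
  rcases a with a | a <;> rcases b with b | b <;>
    simp [hσ, SMat, J, one_apply, Fin.ext_iff] <;> grind

lemma SMat_mul_self (q : ℕ) : SMat F q * SMat F q = -1 := by
  rw [SMat_eq_reindex_neg_J, ← map_mul, neg_mul_neg, J_squared, map_neg, map_one]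

lemma SMat_transpose (q : ℕ) : (SMat F q)ᵀ = -SMat F q := by
  rw [SMat_eq_reindex_neg_J, coe_reindexAlgEquiv, transpose_reindex, transpose_neg, J_transpose]
  rfl

end SymplecticMatrix

section Osp

variable {F} {p q : ℕ}

lemma mem_ospSub_fromBlocks {A : Matrix (Fin p) (Fin p) F} {B : Matrix (Fin p) (Fin (2 * q)) F}
    {C : Matrix (Fin (2 * q)) (Fin p) F} {D : Matrix (Fin (2 * q)) (Fin (2 * q)) F} :
    fromBlocks A B C D ∈ ospSub F p q ↔
      Aᵀ = A ∧ SMat F q * C = Bᵀ ∧ Dᵀ * SMat F q = SMat F q * D :=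
  Iff.rfl

lemma apply_eq_zero_symm_of_mem_ospSub {X : MJ F p (2 * q)} (hX : X ∈ ospSub F p q)
    (i j : Fin p ⊕ Fin (2 * q)) (h : (fromBlocks 1 0 0 (SMat F q) * X : MJ F p (2 * q)) i j = 0) :
    (fromBlocks 1 0 0 (SMat F q) * X : MJ F p (2 * q)) j i = 0 := by
  rw [← fromBlocks_toBlocks X, mem_ospSub_fromBlocks] at hX
  obtain ⟨hA, hC, hD⟩ := hX
  have hSD : (SMat F q * X.toBlocks₂₂)ᵀ = -(SMat F q * X.toBlocks₂₂) := by
    rw [transpose_mul, SMat_transpose, mul_neg, hD]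
  have hform : fromBlocks 1 0 0 (SMat F q) * X = fromBlocks X.toBlocks₁₁ X.toBlocks₁₂
      X.toBlocks₁₂ᵀ (SMat F q * X.toBlocks₂₂) := by
    conv_lhs => rw [← fromBlocks_toBlocks X, fromBlocks_multiply]
    simp [hC]
  rw [hform] at h ⊢
  rcases i with i | i <;> rcases j with j | j
  · rwa [fromBlocks_apply₁₁, ← hA]
  · exact h
  · exact h
  · rw [fromBlocks_apply₂₂] at h ⊢
    rw [← neg_eq_zero, ← neg_apply, ← hSD, transpose_apply, h]

lemma fromBlocks_SMat_mul_injective :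
    Function.Injective (LinearMap.mulLeft F (fromBlocks 1 0 0 (SMat F q) : MJ F p (2 * q))) := by
  have hinv : fromBlocks 1 0 0 (-SMat F q) * fromBlocks 1 0 0 (SMat F q) =
      (1 : MJ F p (2 * q)) := by
    simp [fromBlocks_multiply, SMat_mul_self]
  exact Function.LeftInverse.injective (g := LinearMap.mulLeft F (fromBlocks 1 0 0 (-SMat F q)))
    fun X => by rw [LinearMap.mulLeft_apply, LinearMap.mulLeft_apply, ← mul_assoc, hinv, one_mul]

variable (F p q) in
lemma finrank_ospSub_le : Module.finrank F (ospSub F p q) ≤ (p + 2 * q + 1).choose 2 := by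
  let formMul := LinearMap.mulLeft F (fromBlocks 1 0 0 (SMat F q) : MJ F p (2 * q))
  have hsymm : ∀ Y ∈ (ospSub F p q).map formMul, ∀ i j, Y i j = 0 → Y j i = 0 := by
    rintro _ ⟨X, hX, rfl⟩
    exact apply_eq_zero_symm_of_mem_ospSub hX
  calc Module.finrank F (ospSub F p q) = Module.finrank F ((ospSub F p q).map formMul) :=
        ((ospSub F p q).equivMapOfInjective formMul fromBlocks_SMat_mul_injective).finrank_eq
    _ ≤ (Fintype.card (Fin p ⊕ Fin (2 * q)) + 1).choose 2 :=
        finrank_le_choose_of_apply_eq_zero_symm hsymm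
    _ = (p + 2 * q + 1).choose 2 := by simp

lemma one_mem_ospSub : (1 : MJ F p (2 * q)) ∈ ospSub F p q := by
  rw [← fromBlocks_one, mem_ospSub_fromBlocks]
  simp

variable (F q) in
/-- The diagonal matrix unit `e_i` of the symmetric block of `osp(p,q)`, an even idempotent. -/
def ospIdem (i : Fin p) : ospSub F p q :=
  ⟨fromBlocks (single i i 1) 0 0 0, by simp [mem_ospSub_fromBlocks]⟩

/-- The odd element `o(C) = [[0, C], [S⁻¹Cᵀ, 0]]` of `osp(p,q)`, written with `S⁻¹ = -S`. -/
def ospOdd (C : Matrix (Fin p) (Fin (2 * q)) F) : ospSub F p q :=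
  ⟨fromBlocks 0 C (-(SMat F q * Cᵀ)) 0, by
    simp [mem_ospSub_fromBlocks, ← Matrix.mul_assoc, SMat_mul_self]⟩

lemma ospIdem_ne_zero (i : Fin p) : ospIdem F q i ≠ 0 := fun h => by
  simpa [ospIdem] using congrArg (fun X : ospSub F p q => X.1 (.inl i) (.inl i)) h

lemma ospIdem_mem_evenSub (i : Fin p) : (ospIdem F q i : MJ F p (2 * q)) ∈ evenSub F p (2 * q) :=
  fromBlocks_mem_evenSub _ _

lemma isIdempotentElem_ospIdem (i : Fin p) :
    IsIdempotentElem (ospIdem F q i : MJ F p (2 * q)) := by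
  simp [IsIdempotentElem, ospIdem, fromBlocks_multiply]

lemma ospOdd_mem_oddSub (C : Matrix (Fin p) (Fin (2 * q)) F) :
    (ospOdd C : MJ F p (2 * q)) ∈ oddSub F p (2 * q) :=
  fromBlocks_mem_oddSub _ _

variable [NeZero (2 : F)]

lemma jmul_ospOdd (B C : Matrix (Fin p) (Fin (2 * q)) F) :
    jmul (ospOdd B : MJ F p (2 * q)) (ospOdd C : MJ F p (2 * q)) =
      (2 : F)⁻¹ • fromBlocks (C * SMat F q * Bᵀ - B * SMat F q * Cᵀ) 0 0
        (SMat F q * (Cᵀ * B - Bᵀ * C)) := by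
  rw [jmul_of_mem_oddSub (ospOdd_mem_oddSub B) (ospOdd_mem_oddSub C)]
  simp only [ospOdd, fromBlocks_multiply, sub_eq_add_neg, fromBlocks_neg, fromBlocks_add]
  congr 2 <;> simp [Matrix.mul_assoc, Matrix.mul_add, add_comm]

lemma jmul_ospOdd_mem_ospSub (B C : Matrix (Fin p) (Fin (2 * q)) F) :
    jmul (ospOdd B : MJ F p (2 * q)) (ospOdd C : MJ F p (2 * q)) ∈ ospSub F p q := by
  rw [jmul_ospOdd]
  refine Submodule.smul_mem _ _ (mem_ospSub_fromBlocks.mpr ⟨?_, by simp, ?_⟩)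
  · simp [SMat_transpose, Matrix.mul_assoc, add_comm, sub_eq_add_neg]
  · simp only [transpose_mul, transpose_sub, transpose_transpose, SMat_transpose, Matrix.mul_neg,
      Matrix.neg_mul, Matrix.mul_assoc, SMat_mul_self, mul_one, ← Matrix.mul_assoc (SMat F q)]
    simp

/-- The product `o(C) ∘ o(CS)` of two odd elements of `osp(p,q)`; without the twist by `S` it would
be zero, since `o(C) ∘ o(C)` is a commutator. -/
def ospTwistedSq (C : Matrix (Fin p) (Fin (2 * q)) F) : ospSub F p q :=
  ⟨jmul (ospOdd C : MJ F p (2 * q)) (ospOdd (C * SMat F q) : MJ F p (2 * q)),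
    jmul_ospOdd_mem_ospSub C (C * SMat F q)⟩

lemma coe_ospTwistedSq (C : Matrix (Fin p) (Fin (2 * q)) F) :
    (ospTwistedSq C : MJ F p (2 * q)) =
      fromBlocks (-(C * Cᵀ)) 0 0 ((2 : F)⁻¹ • (Cᵀ * C - SMat F q * (Cᵀ * C) * SMat F q)) := by
  have upperLeft : C * SMat F q * SMat F q * Cᵀ - C * SMat F q * (C * SMat F q)ᵀ =
      (2 : F) • -(C * Cᵀ) := by
    simp [SMat_transpose, Matrix.mul_assoc, ← Matrix.mul_assoc (SMat F q), SMat_mul_self,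
      sub_eq_add_neg, two_smul]
  have lowerRight : SMat F q * ((C * SMat F q)ᵀ * C - Cᵀ * (C * SMat F q)) =
      Cᵀ * C - SMat F q * (Cᵀ * C) * SMat F q := by
    simp [SMat_transpose, Matrix.mul_sub, ← Matrix.mul_assoc, SMat_mul_self]
  refine (jmul_ospOdd C (C * SMat F q)).trans ?_
  rw [upperLeft, lowerRight, fromBlocks_smul, inv_smul_smul₀ two_ne_zero, smul_zero, smul_zero]

lemma coe_sum_ospTwistedSq_single (i : Fin p) :
    ((∑ a, ospTwistedSq (single i a 1) : ospSub F p q) : MJ F p (2 * q)) =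
      fromBlocks (-(2 * q : F) • single i i 1) 0 0 1 := by
  have upperLeft : ∑ _a : Fin (2 * q), -single i i (1 : F) = -(2 * q : F) • single i i 1 := by
    simp [← Nat.cast_smul_eq_nsmul F]
  have lowerRight : ∑ a, (2 : F)⁻¹ • (single a a 1 - SMat F q * single a a 1 * SMat F q) = 1 := by
    rw [← Finset.smul_sum, Finset.sum_sub_distrib, ← Finset.sum_mul, ← Finset.mul_sum,
      sum_single_one, mul_one, SMat_mul_self, inv_smul_eq_iff₀ two_ne_zero, two_smul,
      sub_neg_eq_add]
  simp only [Submodule.coe_sum, coe_ospTwistedSq, transpose_single, single_mul_single_same, mul_one,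
    sum_fromBlocks, upperLeft, lowerRight, Finset.sum_const_zero]

lemma one_eq_sum_ospIdem_add_sum_ospTwistedSq (i : Fin p) :
    (⟨1, one_mem_ospSub⟩ : ospSub F p q) =
      ∑ j, ospIdem F q j + (2 * q : F) • ospIdem F q i + ∑ a, ospTwistedSq (single i a 1) := by
  ext1
  rw [Submodule.coe_add, coe_sum_ospTwistedSq_single]
  simp only [ospIdem, Submodule.coe_add, Submodule.coe_sum, Submodule.coe_smul, sum_fromBlocks,
    sum_single_one, Finset.sum_const_zero, fromBlocks_smul, fromBlocks_add, smul_zero, add_zero,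
    zero_add, neg_smul, add_neg_cancel_right, fromBlocks_one]

end Osp

section SuperHom

variable {F}

/-- A homomorphism of superalgebras from `B` to a matrix superalgebra. As `B` is only a subspace,
multiplicativity concerns the pairs of elements of `B` whose product lies in `B`. -/
structure IsSuperHom {n m n' m' : ℕ} {B : Submodule F (MJ F n' m')} (φ : B →ₗ[F] MJ F n m) :
    Prop where
  map_even : ∀ x : B, (x : MJ F n' m') ∈ evenSub F n' m' → φ x ∈ evenSub F n m
  map_odd : ∀ x : B, (x : MJ F n' m') ∈ oddSub F n' m' → φ x ∈ oddSub F n m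
  map_jmul : ∀ x y z : B, jmul (x : MJ F n' m') y = z → jmul (φ x) (φ y) = φ z

lemma exists_isSuperHom_of_superIso {n m n' m' : ℕ} {A : Submodule F (MJ F n m)}
    {B : Submodule F (MJ F n' m')} (hA : ∀ x ∈ A, ∀ y ∈ A, jmul x y ∈ A) (h : SuperIso F A B) :
    ∃ φ : B →ₗ[F] MJ F n m, IsSuperHom φ ∧ Function.Injective φ ∧ LinearMap.range φ = A := by
  obtain ⟨e, heven, hodd, hmul⟩ := h
  refine ⟨A.subtype ∘ₗ e.symm, ⟨fun x hx => ?_, fun x hx => ?_, fun x y z hxy => ?_⟩,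
    A.subtype_injective.comp e.symm.injective, ?_⟩
  · simpa [heven] using hx
  · simpa [hodd] using hx
  · have he := hmul (e.symm x) (e.symm y) ⟨_, hA _ (e.symm x).2 _ (e.symm y).2⟩ rfl
    rw [e.apply_symm_apply, e.apply_symm_apply, hxy] at he
    simp [Subtype.ext he]
  · rw [LinearMap.range_comp_of_range_eq_top _ e.symm.range, A.range_subtype]

namespace IsSuperHom

variable {n m n' m' : ℕ} {B : Submodule F (MJ F n' m')} {φ : B →ₗ[F] MJ F n m}

lemma isIdempotentElem_apply [NeZero (2 : F)] (hφ : IsSuperHom φ) {x : B}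
    (hx : (x : MJ F n' m') ∈ evenSub F n' m') (hidem : IsIdempotentElem (x : MJ F n' m')) :
    IsIdempotentElem (φ x) := by
  have h := hφ.map_jmul x x x (by rw [jmul_self_of_mem_evenSub hx, hidem.eq])
  rwa [jmul_self_of_mem_evenSub (hφ.map_even x hx)] at h

lemma trace_apply_jmul_eq_zero [NeZero (2 : F)] (hφ : IsSuperHom φ) {x y z : B}
    (hx : (x : MJ F n' m') ∈ oddSub F n' m') (hy : (y : MJ F n' m') ∈ oddSub F n' m')
    (hxy : jmul (x : MJ F n' m') y = z) : (φ z).trace = 0 := by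
  rw [← hφ.map_jmul x y z hxy, trace_jmul_of_mem_oddSub (hφ.map_odd x hx) (hφ.map_odd y hy)]

variable {p q : ℕ} {φ : ospSub F p q →ₗ[F] MJ F n m}

lemma trace_apply_one [NeZero (2 : F)] (hφ : IsSuperHom φ) (i : Fin p) :
    (φ ⟨1, one_mem_ospSub⟩).trace =
      ∑ j, (φ (ospIdem F q j)).trace + 2 * q * (φ (ospIdem F q i)).trace := by
  have trace_odd (a : Fin (2 * q)) :
      (φ (ospTwistedSq (single i a 1))).trace = 0 :=
    hφ.trace_apply_jmul_eq_zero (ospOdd_mem_oddSub _) (ospOdd_mem_oddSub _) rfl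
  rw [one_eq_sum_ospIdem_add_sum_ospTwistedSq i]
  simp only [map_add, map_sum, map_smul, trace_add, trace_sum, trace_smul, trace_odd,
    Finset.sum_const_zero, add_zero, smul_eq_mul]

lemma rank_apply_one [CharZero F] (hφ : IsSuperHom φ) (i : Fin p) :
    (φ ⟨1, one_mem_ospSub⟩).rank =
      ∑ j, (φ (ospIdem F q j)).rank + 2 * q * (φ (ospIdem F q i)).rank := by
  have one_mem_evenSub : (1 : MJ F p (2 * q)) ∈ evenSub F p (2 * q) := by
    rw [← fromBlocks_one]
    exact fromBlocks_mem_evenSub 1 1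
  have rank_idem (j : Fin p) := trace_eq_rank_of_isIdempotentElem
    (hφ.isIdempotentElem_apply (ospIdem_mem_evenSub j) (isIdempotentElem_ospIdem j))
  have h := hφ.trace_apply_one i
  simp only [rank_idem, trace_eq_rank_of_isIdempotentElem
    (hφ.isIdempotentElem_apply (x := ⟨1, one_mem_ospSub⟩) one_mem_evenSub .one)] at h
  exact_mod_cast h

lemma mul_le_of_le_rank [CharZero F] (hφ : IsSuperHom φ) (hp : 1 ≤ p) {d : ℕ}
    (hd : ∀ j, d ≤ (φ (ospIdem F q j)).rank) : (p + 2 * q) * d ≤ n + m := by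
  calc (p + 2 * q) * d = ∑ _j : Fin p, d + 2 * q * d := by simp [add_mul]
    _ ≤ ∑ j, (φ (ospIdem F q j)).rank + 2 * q * (φ (ospIdem F q ⟨0, hp⟩)).rank := by
        gcongr <;> exact hd _
    _ = (φ ⟨1, one_mem_ospSub⟩).rank := (hφ.rank_apply_one ⟨0, hp⟩).symm
    _ ≤ n + m := by simpa using rank_le_card_width (φ ⟨1, one_mem_ospSub⟩)

lemma le_of_range_le_QSub [CharZero F] {φ : ospSub F p q →ₗ[F] MJ F n n} (hφ : IsSuperHom φ)
    (hinj : Function.Injective φ) (hQ : LinearMap.range φ ≤ QSub F n) (hp : 1 ≤ p) :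
    p + 2 * q ≤ n := by
  have two_le_rank (j : Fin p) : 2 ≤ (φ (ospIdem F q j)).rank :=
    two_le_rank_of_mem_QSub (hQ (LinearMap.mem_range_self φ _))
      (hφ.map_even _ (ospIdem_mem_evenSub j))
      (hφ.isIdempotentElem_apply (ospIdem_mem_evenSub j) (isIdempotentElem_ospIdem j))
      ((map_ne_zero_iff φ hinj).mpr (ospIdem_ne_zero j))
  have h := hφ.mul_le_of_le_rank hp two_le_rank
  omega

end IsSuperHom

end SuperHom

theorem dim_osp_subalgebra_of_Q_le_general
    (F : Type*) [Field F] [CharZero F] (n p q : ℕ) (hp : 1 ≤ p)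
    (A : Submodule F (MJ F n n)) (hAQ : A ≤ QSub F n) (hA : IsSubalg F A)
    (hiso : SuperIso F A (ospSub F p q)) :
    Module.finrank F A ≤ (n ^ 2 + n) / 2 := by
  obtain ⟨φ, hφ, hinj, rfl⟩ := exists_isSuperHom_of_superIso hA.2 hiso
  have hpq : p + 2 * q ≤ n := hφ.le_of_range_le_QSub hinj hAQ hp
  calc Module.finrank F (LinearMap.range φ) = Module.finrank F (ospSub F p q) :=
        LinearMap.finrank_range_of_inj hinj
    _ ≤ (p + 2 * q + 1).choose 2 := finrank_ospSub_le F p q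
    _ ≤ (n + 1).choose 2 := Nat.choose_le_choose 2 (by gcongr)
    _ = (n ^ 2 + n) / 2 := by rw [Nat.choose_two_right, Nat.add_sub_cancel]; ring_nf

/-- if `A` is a subsuperalgebra of `Q(n)` isomorphic (as a superalgebra) to
`osp(p,q)` (`n, p, q ≥ 1`), then `dim_F A ≤ (n² + n)/2`. -/
theorem dim_osp_subalgebra_of_Q_le
    (F : Type*) [Field F] [IsAlgClosed F] [CharZero F]
    (n p q : ℕ) (hn : 1 ≤ n) (hp : 1 ≤ p) (hq : 1 ≤ q)
    (A : Submodule F (MJ F n n)) (hAQ : A ≤ QSub F n) (hA : IsSubalg F A)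
    (hiso : SuperIso F A (ospSub F p q)) :
    Module.finrank F A ≤ (n ^ 2 + n) / 2 :=
  dim_osp_subalgebra_of_Q_le_general F n p q hp A hAQ hA hiso

end SJ
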